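/- arXiv:1311.0539 — 2 statements merged into one kernel-verified Lean document; each statement's English description precedes it below -/
import Mathlib

section
/- For every k ≥ 3: k(k−1)/4 ≤ AR_s(P_{k−1}) ≤ AR_s(C_k) ≤ k², where P_{k−1} denotes the path with k−1 edges and C_k denotes the cycle with k edges. -/
open SimpleGraph

/-- A proper edge coloring of `G`: adjacent (distinct, vertex-sharing) edges get
different colors. -/
def IsProperEdgeColoring {V : Type*} (G : SimpleGraph V) (c : Sym2 V → ℕ) : Prop :=
  ∀ e₁ ∈ G.edgeSet, ∀ e₂ ∈ G.edgeSet, e₁ ≠ e₂ → (∃ v, v ∈ e₁ ∧ v ∈ e₂) → c e₁ ≠ c e₂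

/-- `G` contains a rainbow copy of `H` with respect to the edge coloring `c`:
there is an injective graph homomorphism `H → G` whose image edges receive
pairwise distinct colors. -/
def HasRainbowCopy {V W : Type*} (G : SimpleGraph V) (H : SimpleGraph W) (c : Sym2 V → ℕ) : Prop :=
  ∃ f : H →g G, Function.Injective f ∧
    ∀ e₁ ∈ H.edgeSet, ∀ e₂ ∈ H.edgeSet, c (Sym2.map f e₁) = c (Sym2.map f e₂) → e₁ = e₂

/-- `G → H`: every proper edge coloring of `G` contains a rainbow copy of `H`. -/
def ArrowsTo {V W : Type*} (G : SimpleGraph V) (H : SimpleGraph W) : Prop :=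
  ∀ c : Sym2 V → ℕ, IsProperEdgeColoring G c → HasRainbowCopy G H c

/-- The size anti-Ramsey number: the minimum number of edges of a (finite) graph
`G` with `G → H`. -/
noncomputable def ARs {W : Type*} (H : SimpleGraph W) : ℕ :=
  sInf {m | ∃ (n : ℕ) (G : SimpleGraph (Fin n)), ArrowsTo G H ∧ G.edgeSet.ncard = m}

/-- The local anti-Ramsey number: the minimum `n` such that `K_n → H`. -/
noncomputable def ARloc {W : Type*} (H : SimpleGraph W) : ℕ :=
  sInf {n | ArrowsTo (⊤ : SimpleGraph (Fin n)) H}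

/-!
Lower bound: color the edges of `G` greedily, each color class being a largest matching among the
edges still uncolored. A path is a union of two matchings, so each color class is at least half as
large as the uncolored part of a rainbow path, which in turn loses at most one edge per class. A
path with `m` edges therefore forces `m (m + 1) ≤ 4 e(G)`.

Upper bound: blow up every other vertex of `C_k`, the vertex `i` to about `2 i` vertices. In any
proper coloring of the blow-up a rainbow `C_k` can be chosen greedily: the new vertex only has to
avoid, at each of its two neighbors, the colors of the fewer than `i` edges chosen so far. The
blow-up has at most `∑ (2 i + 1) = k ^ 2` edges.
-/

open scoped Finset

section Monotonicity

variable {V V' W W' : Type*} {G : SimpleGraph V} {G' : SimpleGraph V'}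
  {H : SimpleGraph W} {H' : SimpleGraph W'}

lemma ArrowsTo.trans_isContained (hGH : ArrowsTo G H) (hH : H' ⊑ H) : ArrowsTo G H' := by
  intro c hc
  obtain ⟨f, hf, hrainbow⟩ := hGH c hc
  obtain ⟨g⟩ := hH
  refine ⟨f.comp g.toHom, hf.comp g.injective, fun e₁ he₁ e₂ he₂ heq ↦ ?_⟩
  refine Sym2.map.injective g.injective
    (hrainbow _ (g.toHom.map_mem_edgeSet he₁) _ (g.toHom.map_mem_edgeSet he₂) ?_)
  simpa only [Sym2.map_map, Hom.coe_comp] using heq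

lemma IsProperEdgeColoring.comap {c : Sym2 V' → ℕ} (hc : IsProperEdgeColoring G' c)
    (f : Copy G G') : IsProperEdgeColoring G (c ∘ Sym2.map f) := by
  rintro e₁ he₁ e₂ he₂ hne ⟨v, hv₁, hv₂⟩
  exact hc _ (f.toHom.map_mem_edgeSet he₁) _ (f.toHom.map_mem_edgeSet he₂)
    ((Sym2.map.injective f.injective).ne hne)
    ⟨f v, Sym2.mem_map.2 ⟨v, hv₁, rfl⟩, Sym2.mem_map.2 ⟨v, hv₂, rfl⟩⟩

lemma ArrowsTo.mono_isContained (hGH : ArrowsTo G H) (hG : G ⊑ G') : ArrowsTo G' H := by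
  intro c hc
  obtain ⟨g⟩ := hG
  obtain ⟨f, hf, hrainbow⟩ := hGH _ (hc.comap g)
  refine ⟨g.toHom.comp f, g.injective.comp hf, fun e₁ he₁ e₂ he₂ heq ↦ ?_⟩
  refine hrainbow e₁ he₁ e₂ he₂ ?_
  simp only [Function.comp_apply, Sym2.map_map]
  exact heq

lemma ARs_le_ncard_edgeSet [Finite V] (hGH : ArrowsTo G H) : ARs H ≤ G.edgeSet.ncard := by
  have := Fintype.ofFinite V
  let φ := G.overFinIso rfl
  exact Nat.sInf_le ⟨_, _, hGH.mono_isContained φ.isContained,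
    (Nat.card_congr φ.mapEdgeSet).symm⟩

end Monotonicity

section GreedyColoring

variable {α : Type*} {L : SimpleGraph α}

lemma card_le_mul_of_colorable_induce {T : Finset α} {q m : ℕ}
    (hT : (L.induce (T : Set α)).Colorable q)
    (hm : ∀ S ⊆ T, L.IsIndepSet (S : Set α) → #S ≤ m) : #T ≤ m * q := by
  classical
  obtain ⟨C⟩ := hT
  have hclass (i : Fin q) : #{x | C x = i} ≤ m := by
    rw [← Finset.card_map (Function.Embedding.subtype _)]
    refine hm _ (fun x hx ↦ ?_) ?_
    · obtain ⟨y, -, rfl⟩ := Finset.mem_map.1 hx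
      exact y.2
    · simp only [Finset.coe_map, Finset.coe_filter_univ]
      rintro _ ⟨x, hx, rfl⟩ _ ⟨y, hy, rfl⟩ -
      exact C.not_adj_of_mem_colorClass hx hy
  simpa using Finset.card_le_mul_card_image_of_maps_to
    (s := Finset.univ) (t := Finset.univ) (fun x _ ↦ Finset.mem_univ (C x)) m (fun i _ ↦ hclass i)

lemma exists_isIndepSet_card_maximal (L : SimpleGraph α) {E : Finset α} (hE : E.Nonempty) :
    ∃ M ⊆ E, M.Nonempty ∧ L.IsIndepSet (M : Set α) ∧
      ∀ S ⊆ E, L.IsIndepSet (S : Set α) → #S ≤ #M := by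
  classical
  obtain ⟨M, hM, hmax⟩ :=
    (E.powerset.filter fun S : Finset α ↦ L.IsIndepSet (S : Set α)).exists_max_image Finset.card
      ⟨∅, by simp⟩
  simp only [Finset.mem_filter, Finset.mem_powerset, and_imp] at hM hmax
  obtain ⟨x, hx⟩ := hE
  have hpos : 1 ≤ #M := hmax {x} (by simpa using hx) (by simp)
  exact ⟨M, hM.1, Finset.card_pos.1 hpos, hM.2, hmax⟩

/- Color a largest independent set with color `0` and recurse on the rest: a rainbow set `T` loses
at most one element, while at least `#T / q` elements are removed from `E`. -/
lemma exists_coloring_forall_injOn_card_mul_le (L : SimpleGraph α) (E : Finset α) :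
    ∃ c : α → ℕ, (∀ x ∈ E, ∀ y ∈ E, L.Adj x y → c x ≠ c y) ∧
      ∀ T ⊆ E, ∀ q, (L.induce (T : Set α)).Colorable q → Set.InjOn c T →
        #T * (#T + 1) ≤ 2 * q * #E := by
  classical
  induction E using Finset.strongInduction with | H E ih
  rcases E.eq_empty_or_nonempty with rfl | hE
  · exact ⟨0, by simp, fun T hT q _ _ ↦ by simp [Finset.subset_empty.1 hT]⟩
  obtain ⟨M, hME, hM, hMindep, hMmax⟩ := exists_isIndepSet_card_maximal L hE
  obtain ⟨c, hc, hbound⟩ := ih (E \ M) (Finset.sdiff_ssubset hME hM)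
  refine ⟨fun x ↦ if x ∈ M then 0 else c x + 1, fun x hx y hy hxy ↦ ?_, fun T hT q hq hinj ↦ ?_⟩
  · have hindep : x ∈ M → y ∈ M → False := fun hxM hyM ↦ hMindep hxM hyM hxy.ne hxy
    grind
  have hTM : #(T ∩ M) ≤ 1 := Finset.card_le_one.2 fun x hx y hy ↦ by
    rw [Finset.mem_inter] at hx hy
    exact hinj hx.1 hy.1 (by simp [hx.2, hy.2])
  have hTq : #T ≤ #M * q :=
    card_le_mul_of_colorable_induce hq fun S hS ↦ hMmax S (hS.trans hT)
  have hrest : #(T \ M) * (#(T \ M) + 1) ≤ 2 * q * #(E \ M) := by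
    refine hbound _ (Finset.sdiff_subset_sdiff hT le_rfl) q
      (hq.of_hom (induceHomOfLE L (by simp)).toHom) fun x hx y hy hxy ↦ ?_
    simp only [Finset.coe_sdiff, Set.mem_sdiff, Finset.mem_coe] at hx hy
    exact hinj hx.1 hy.1 (by simp [hx.2, hy.2, hxy])
  have hTcard := Finset.card_sdiff_add_card_inter T M
  have hEcard := Finset.card_sdiff_add_card_eq_card hME
  calc #T * (#T + 1) ≤ #(T \ M) * (#(T \ M) + 1) + 2 * #T := by
        obtain h | h : #T = #(T \ M) ∨ #T = #(T \ M) + 1 := by lia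
        all_goals rw [h]; lia
    _ ≤ 2 * q * #(E \ M) + 2 * (#M * q) := by lia
    _ = 2 * q * #E := by rw [← hEcard]; ring

end GreedyColoring

section LowerBound

variable {V W : Type*} {G : SimpleGraph V} {H : SimpleGraph W} {q : ℕ}

lemma isProperEdgeColoring_iff_lineGraph {c : Sym2 V → ℕ} :
    IsProperEdgeColoring G c ↔ ∀ e₁ e₂, G.lineGraph.Adj e₁ e₂ → c e₁ ≠ c e₂ := by
  simp only [IsProperEdgeColoring, lineGraph_adj_iff_exists, Subtype.forall, ne_eq,
    Subtype.mk.injEq, and_imp]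

theorem ArrowsTo.ncard_edgeSet_mul_le [Finite V] (hGH : ArrowsTo G H)
    (hq : H.lineGraph.Colorable q) :
    H.edgeSet.ncard * (H.edgeSet.ncard + 1) ≤ 2 * q * G.edgeSet.ncard := by
  classical
  have := Fintype.ofFinite V
  obtain ⟨c, hc, hbound⟩ := exists_coloring_forall_injOn_card_mul_le G.lineGraph Finset.univ
  have hext (e : G.edgeSet) : Function.extend Subtype.val c 0 (e : Sym2 V) = c e :=
    Subtype.val_injective.extend_apply c 0 e
  obtain ⟨f, hf, hrainbow⟩ := hGH (Function.extend Subtype.val c 0) <|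
    isProperEdgeColoring_iff_lineGraph.2 fun e₁ e₂ he ↦ by
      rw [hext, hext]
      exact hc e₁ (Finset.mem_univ _) e₂ (Finset.mem_univ _) he
  let φ : H.lineGraph ↪g G.lineGraph := (f.toCopy hf).toLineGraphEmbedding
  have hφ : Function.Injective (c ∘ φ) := fun e₁ e₂ he ↦ by
    refine Subtype.ext (hrainbow e₁ e₁.2 e₂ e₂.2 ?_)
    exact (hext (φ e₁)).trans (he.trans (hext (φ e₂)).symm)
  have hT : (Set.range φ).toFinset.card = H.edgeSet.ncard := by
    rw [← Set.ncard_eq_toFinset_card', Set.ncard_range_of_injective φ.injective]; rfl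
  have := hbound (Set.range φ).toFinset (Finset.subset_univ _) q
    (by
      rw [Set.coe_toFinset]
      exact hq.of_hom φ.isoInduceRange.symm.toHom)
    (by
      rw [Set.coe_toFinset]
      exact hφ.injOn_range)
  rw [hT, Finset.card_univ] at this
  simpa [Set.ncard_eq_toFinset_card'] using this

lemma mem_iff_of_mem_edgeSet_pathGraph {n : ℕ} {e : Sym2 (Fin n)}
    (he : e ∈ (pathGraph n).edgeSet) (v : Fin n) :
    v ∈ e ↔ (v : ℕ) = e.inf ∨ (v : ℕ) = e.inf + 1 := by
  induction e with | _ a b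
  simp only [mem_edgeSet, pathGraph_adj] at he
  simp only [Sym2.mem_iff, Fin.ext_iff, Sym2.inf_mk, Fin.coe_min]
  lia

/-- Sending an edge of a path to its smaller endpoint maps adjacent edges to adjacent vertices. -/
def lineGraphPathGraphHom (n : ℕ) : (pathGraph n).lineGraph →g pathGraph n where
  toFun e := e.1.inf
  map_rel' {e₁ e₂} h := by
    obtain ⟨hne, v, hv₁, hv₂⟩ := lineGraph_adj_iff_exists.1 h
    have hinf : (e₁.1.inf : ℕ) ≠ e₂.1.inf := fun hinf ↦ hne <| Subtype.ext <| Sym2.ext fun w ↦ by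
      rw [mem_iff_of_mem_edgeSet_pathGraph e₁.2, mem_iff_of_mem_edgeSet_pathGraph e₂.2, hinf]
    rw [mem_iff_of_mem_edgeSet_pathGraph e₁.2] at hv₁
    rw [mem_iff_of_mem_edgeSet_pathGraph e₂.2] at hv₂
    rw [pathGraph_adj]
    lia

lemma lineGraph_pathGraph_colorable_two (n : ℕ) : (pathGraph n).lineGraph.Colorable 2 :=
  (pathGraph.bicoloring n).colorable.of_hom (lineGraphPathGraphHom n)

lemma le_ncard_edgeSet_pathGraph (n : ℕ) : n ≤ (pathGraph (n + 1)).edgeSet.ncard := by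
  simpa [Set.ncard_def] using (pathGraph_connected n).card_vert_le_card_edgeSet_add_one

end LowerBound

section Blowup

variable {W : Type*} {H : SimpleGraph W} {P : W → Type*}

/-- The edges of `H` with both ends in `A`. -/
def edgesWithin (H : SimpleGraph W) [DecidableRel H.Adj] (A : Finset W) : Finset (Sym2 W) :=
  {e ∈ A.sym2 | e ∈ H.edgeSet}

lemma mem_edgesWithin [DecidableRel H.Adj] {A : Finset W} {e : Sym2 W} :
    e ∈ edgesWithin H A ↔ (∀ w ∈ e, w ∈ A) ∧ e ∈ H.edgeSet := by
  simp only [edgesWithin, Finset.mem_filter, Finset.mem_sym2_iff]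

lemma mk_mem_edgesWithin [DecidableRel H.Adj] {A : Finset W} {a b : W} :
    s(a, b) ∈ edgesWithin H A ↔ (a ∈ A ∧ b ∈ A) ∧ H.Adj a b := by
  simp only [mem_edgesWithin, Sym2.forall_mem_pair, mem_edgeSet]

lemma edgesWithin_mono [DecidableRel H.Adj] {A B : Finset W} (hAB : A ⊆ B) :
    edgesWithin H A ⊆ edgesWithin H B :=
  Finset.filter_subset_filter _ (Finset.sym2_mono hAB)

lemma edgesWithin_insert [DecidableEq W] [DecidableRel H.Adj] (v : W) (A : Finset W) :
    edgesWithin H (insert v A) =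
      edgesWithin H A ∪ Finset.image (s(v, ·)) {w ∈ A | H.Adj v w} := by
  ext e
  induction e with | _ a b
  simp only [Finset.mem_union, mk_mem_edgesWithin, Finset.mem_insert, Finset.mem_image,
    Finset.mem_filter, Sym2.eq_iff]
  constructor
  · rintro ⟨⟨rfl | ha, rfl | hb⟩, hab⟩
    · exact (H.irrefl hab).elim
    · exact .inr ⟨b, ⟨hb, hab⟩, .inl ⟨rfl, rfl⟩⟩
    · exact .inr ⟨a, ⟨ha, hab.symm⟩, .inr ⟨rfl, rfl⟩⟩
    · exact .inl ⟨⟨ha, hb⟩, hab⟩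
  · rintro (⟨⟨ha, hb⟩, hab⟩ | ⟨w, ⟨hw, hvw⟩, ⟨rfl, rfl⟩ | ⟨rfl, rfl⟩⟩)
    · exact ⟨⟨.inr ha, .inr hb⟩, hab⟩
    · exact ⟨⟨.inl rfl, .inr hw⟩, hvw⟩
    · exact ⟨⟨.inr hw, .inl rfl⟩, hvw.symm⟩

/-- The blow-up of `H` in which each vertex `w` is replaced by the independent set `P w` and each
edge by a complete bipartite graph. -/
def blowup (H : SimpleGraph W) (P : W → Type*) : SimpleGraph (Σ w, P w) :=
  H.comap Sigma.fst

/-- The copy of `H` in a blow-up that uses the vertex `x w` of each part `P w`. -/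
def blowup.transversal (H : SimpleGraph W) (x : ∀ w, P w) : H →g blowup H P where
  toFun w := ⟨w, x w⟩
  map_rel' h := h

@[simp]
lemma blowup.transversal_apply (x : ∀ w, P w) (w : W) :
    blowup.transversal H x w = ⟨w, x w⟩ := rfl

lemma IsProperEdgeColoring.eq_of_color_eq {c : Sym2 W → ℕ} (hc : IsProperEdgeColoring H c)
    {a b b' : W} (hb : H.Adj a b) (hb' : H.Adj a b') (hcol : c s(a, b) = c s(a, b')) :
    b = b' := by
  by_contra hne
  exact hc _ hb _ hb' (mt Sym2.congr_right.1 hne)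
    ⟨a, Sym2.mem_mk_left a b, Sym2.mem_mk_left a b'⟩ hcol

lemma exists_forall_notMem_of_card_mul_lt {ι α β : Type*} [Fintype α] {g : ι → α → β}
    {N : Finset ι} {C : Finset β} (hg : ∀ i ∈ N, Function.Injective (g i))
    (hcard : #N * #C < Fintype.card α) : ∃ y, ∀ i ∈ N, g i y ∉ C := by
  classical
  have hbad : #(N.biUnion fun i ↦ {y | g i y ∈ C}) < #(Finset.univ : Finset α) :=
    (Finset.card_biUnion_le_card_mul _ _ _ fun i hi ↦ Finset.card_le_card_of_injOn (g i)
      (by simp [Set.MapsTo]) (hg i hi).injOn).trans_lt hcard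
  obtain ⟨y, -, hy⟩ := Finset.exists_mem_notMem_of_card_lt_card hbad
  exact ⟨y, by simpa using hy⟩

lemma exists_forall_color_notMem {c : Sym2 (Σ w, P w) → ℕ}
    (hc : IsProperEdgeColoring (blowup H P) c) (x : ∀ w, P w) {v : W} [Fintype (P v)]
    {N : Finset W} (hN : ∀ w ∈ N, H.Adj v w) {C : Finset ℕ}
    (hcard : #N * #C < Fintype.card (P v)) :
    ∃ y : P v, ∀ w ∈ N, c s(⟨v, y⟩, ⟨w, x w⟩) ∉ C := by
  refine exists_forall_notMem_of_card_mul_lt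
    (g := fun (w : W) (y : P v) ↦ c s(⟨v, y⟩, ⟨w, x w⟩)) (fun w hw y y' hyy' ↦ ?_) hcard
  have hwv : H.Adj w v := (hN w hw).symm
  refine sigma_mk_injective (hc.eq_of_color_eq (a := ⟨w, x w⟩) hwv hwv ?_)
  rwa [Sym2.eq_swap, Sym2.eq_swap (b := (⟨v, y'⟩ : Σ w, P w))]

lemma exists_injOn_update_transversal [DecidableEq W] [DecidableRel H.Adj]
    {c : Sym2 (Σ w, P w) → ℕ} (hc : IsProperEdgeColoring (blowup H P) c) {x : ∀ w, P w}
    {A : Finset W} {v : W} [Fintype (P v)] (hv : v ∉ A)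
    (hx : Set.InjOn (c ∘ Sym2.map (blowup.transversal H x)) (edgesWithin H A))
    (hcard : #{w ∈ A | H.Adj v w} * #(edgesWithin H A) < Fintype.card (P v)) :
    ∃ y : P v, Set.InjOn (c ∘ Sym2.map (blowup.transversal H (Function.update x v y)))
      (edgesWithin H (insert v A)) := by
  obtain ⟨y, hy⟩ := exists_forall_color_notMem hc x
    (fun w hw ↦ (Finset.mem_filter.1 hw).2 : ∀ w ∈ ({w ∈ A | H.Adj v w} : Finset W), H.Adj v w)
    (C := (edgesWithin H A).image (c ∘ Sym2.map (blowup.transversal H x)))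
    ((Nat.mul_le_mul_left _ Finset.card_image_le).trans_lt hcard)
  have hold : Set.EqOn (Sym2.map (blowup.transversal H (Function.update x v y)))
      (Sym2.map (blowup.transversal H x)) (edgesWithin H A) := fun e he ↦
    Sym2.map_congr fun w hw ↦ by
      have hwA : w ∈ A := (mem_edgesWithin.1 he).1 w hw
      simp [ne_of_mem_of_not_mem hwA hv]
  have hnew (w : W) (hw : w ∈ A) : Sym2.map (blowup.transversal H (Function.update x v y))
      s(v, w) = s(⟨v, y⟩, ⟨w, x w⟩) := by
    simp [ne_of_mem_of_not_mem hw hv]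
  refine ⟨y, ?_⟩
  rw [edgesWithin_insert, Finset.coe_union, Set.injOn_union]
  · refine ⟨hx.congr (hold.comp_left).symm, ?_, ?_⟩
    · simp only [Finset.coe_image]
      rintro _ ⟨w, hw, rfl⟩ _ ⟨w', hw', rfl⟩ hcol
      rw [Finset.mem_coe, Finset.mem_filter] at hw hw'
      simp only [Function.comp_apply, hnew w hw.1, hnew w' hw'.1] at hcol
      have hww' : (⟨w, x w⟩ : Σ w, P w) = ⟨w', x w'⟩ :=
        hc.eq_of_color_eq (a := ⟨v, y⟩) hw.2 hw'.2 hcol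
      exact congr_arg (fun u ↦ s(v, Sigma.fst u)) hww'
    · simp only [Finset.coe_image]
      rintro e he _ ⟨w, hw, rfl⟩ hcol
      refine hy w hw (Finset.mem_image.2 ⟨e, he, ?_⟩)
      rw [← hnew w (Finset.mem_filter.1 hw).1, ← hold.comp_left he, hcol, Function.comp_apply]
  · rw [Finset.disjoint_coe, Finset.disjoint_left]
    rintro e he hev
    obtain ⟨w, -, rfl⟩ := Finset.mem_image.1 hev
    exact hv (mk_mem_edgesWithin.1 he).1.1

/- The copy of `H` is chosen vertex by vertex in order of increasing `ρ`, so that `A v` contains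
everything chosen before `v`. By properness, each color already used inside `A v` rules out at most
one vertex of `P v` per neighbor of `v`. -/
theorem arrowsTo_blowup {ι : Type*} [LinearOrder ι] [Finite W] [DecidableRel H.Adj]
    [∀ w, Fintype (P w)] (ρ : W → ι) {A : W → Finset W} (hA : ∀ v w, w ≠ v → ρ w ≤ ρ v → w ∈ A v)
    (hP : ∀ v, #{w ∈ A v | H.Adj v w} * #(edgesWithin H (A v)) < Fintype.card (P v)) :
    ArrowsTo (blowup H P) H := by
  classical
  have := Fintype.ofFinite W
  intro c hc
  suffices hB : ∀ B : Finset W, ∃ x : ∀ w, P w,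
      Set.InjOn (c ∘ Sym2.map (blowup.transversal H x)) (edgesWithin H B) by
    obtain ⟨x, hx⟩ := hB Finset.univ
    refine ⟨blowup.transversal H x, fun w w' h ↦ congr_arg Sigma.fst h, ?_⟩
    have hmem (e : Sym2 W) (he : e ∈ H.edgeSet) : e ∈ edgesWithin H Finset.univ :=
      mem_edgesWithin.2 ⟨fun w _ ↦ Finset.mem_univ w, he⟩
    exact fun e₁ he₁ e₂ he₂ heq ↦ hx (hmem e₁ he₁) (hmem e₂ he₂) heq
  intro B
  induction B using Finset.induction_on_max_value ρ with
  | empty =>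
    have hne (w : W) : Nonempty (P w) := Fintype.card_pos_iff.1 ((Nat.zero_le _).trans_lt (hP w))
    exact ⟨fun w ↦ (hne w).some, by simp [edgesWithin]⟩
  | insert v B hv hρ ih =>
    obtain ⟨x, hx⟩ := ih
    have hBA : B ⊆ A v := fun w hw ↦ hA v w (ne_of_mem_of_not_mem hw hv) (hρ w hw)
    obtain ⟨y, hy⟩ := exists_injOn_update_transversal hc hv hx <| (hP v).trans_le' <|
      Nat.mul_le_mul (Finset.card_le_card (Finset.filter_subset_filter _ hBA))
        (Finset.card_le_card (edgesWithin_mono hBA))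
    exact ⟨_, hy⟩

lemma ncard_edgeSet_blowup_le {ι : Type*} [Fintype ι] [∀ w, Fintype (P w)] {a b : ι → W}
    (hH : ∀ e ∈ H.edgeSet, ∃ i, e = s(a i, b i)) :
    (blowup H P).edgeSet.ncard ≤
      ∑ i, Fintype.card (P (a i)) * Fintype.card (P (b i)) := by
  let φ : (Σ i, P (a i) × P (b i)) → Sym2 (Σ w, P w) := fun z ↦ s(⟨_, z.2.1⟩, ⟨_, z.2.2⟩)
  have hφ : (blowup H P).edgeSet ⊆ Set.range φ := by
    intro e he
    induction e with | _ u v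
    obtain ⟨i, hi⟩ := hH s(u.1, v.1) he
    obtain ⟨u, x⟩ := u
    obtain ⟨v, y⟩ := v
    rcases Sym2.eq_iff.1 hi with ⟨rfl, rfl⟩ | ⟨rfl, rfl⟩
    · exact ⟨⟨i, x, y⟩, rfl⟩
    · exact ⟨⟨i, y, x⟩, Sym2.eq_swap⟩
  calc (blowup H P).edgeSet.ncard ≤ (Set.range φ).ncard := Set.ncard_le_ncard hφ
    _ ≤ Fintype.card (Σ i, P (a i) × P (b i)) := by
        rw [← Nat.card_eq_fintype_card]
        exact Finite.card_range_le φ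
    _ = _ := by simp [Fintype.card_sigma]

end Blowup

section SizeAntiRamsey

variable {W W' : Type*} [Finite W] {H : SimpleGraph W} {H' : SimpleGraph W'}

lemma exists_arrowsTo (H : SimpleGraph W) :
    ∃ (n : ℕ) (G : SimpleGraph (Fin n)), ArrowsTo G H := by
  classical
  have := Fintype.ofFinite W
  let N (v : W) : ℕ := #{w | H.Adj v w} * #(edgesWithin H Finset.univ)
  let B : SimpleGraph (Σ v, Fin (N v + 1)) := blowup H _
  have hB : ArrowsTo B H :=
    arrowsTo_blowup (A := fun _ ↦ Finset.univ) (0 : W → ℕ) (by simp) fun v ↦ by simp [N]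
  exact ⟨_, _, hB.mono_isContained (B.overFinIso rfl).isContained⟩

lemma exists_arrowsTo_ncard_eq_ARs (H : SimpleGraph W) :
    ∃ (n : ℕ) (G : SimpleGraph (Fin n)), ArrowsTo G H ∧ G.edgeSet.ncard = ARs H := by
  obtain ⟨n, G, hG⟩ := exists_arrowsTo H
  have hne : {m | ∃ (n : ℕ) (G : SimpleGraph (Fin n)),
      ArrowsTo G H ∧ G.edgeSet.ncard = m}.Nonempty := ⟨_, n, G, hG, rfl⟩
  exact Nat.sInf_mem hne

lemma ARs_mono (hH : H' ⊑ H) : ARs H' ≤ ARs H := by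
  obtain ⟨n, G, hG, hcard⟩ := exists_arrowsTo_ncard_eq_ARs H
  exact hcard ▸ ARs_le_ncard_edgeSet (hG.trans_isContained hH)

theorem ncard_edgeSet_mul_le_ARs {q : ℕ} (hq : H.lineGraph.Colorable q) :
    H.edgeSet.ncard * (H.edgeSet.ncard + 1) ≤ 2 * q * ARs H := by
  obtain ⟨n, G, hG, hcard⟩ := exists_arrowsTo_ncard_eq_ARs H
  exact hcard ▸ hG.ncard_edgeSet_mul_le hq

end SizeAntiRamsey

section Cycle

variable {n : ℕ}

/-- The position of the vertex `i` of `C_k` in the greedy embedding. Every other vertex, counted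
backwards from the last one `k - 1`, is embedded in increasing order, after all the remaining
vertices, which have rank `0`. -/
def cycleRank {k : ℕ} (i : Fin k) : ℕ := if (k + i) % 2 = 1 then i else 0

/-- The number of vertices that replace the vertex `i` of `C_k` in the blow-up. A vertex of rank
`r > 0` has at most two earlier neighbors and `r - 1` earlier edges, whence `2 * (r - 1) + 1`. The
maximum covers rank `0`, where the subtraction truncates. -/
def cyclePartSize {k : ℕ} (i : Fin k) : ℕ := max 1 (2 * cycleRank i - 1)

/-- The vertices of `C_k` that can be embedded before `v`. -/
def cycleBefore {k : ℕ} (v : Fin k) : Finset (Fin k) := {w | w ≠ v ∧ cycleRank w ≤ cycleRank v}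

lemma mem_cycleBefore {k : ℕ} {v w : Fin k} :
    w ∈ cycleBefore v ↔ w ≠ v ∧ cycleRank w ≤ cycleRank v := by
  simp only [cycleBefore, Finset.mem_filter_univ]

lemma exists_eq_mk_add_one_of_mem_edgeSet_cycleGraph {e : Sym2 (Fin (n + 2))}
    (he : e ∈ (cycleGraph (n + 2)).edgeSet) : ∃ i, e = s(i, i + 1) := by
  induction e with | _ a b
  rw [mem_edgeSet, cycleGraph_adj, sub_eq_iff_eq_add', sub_eq_iff_eq_add'] at he
  rcases he with rfl | rfl
  · exact ⟨b, Sym2.eq_swap⟩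
  · exact ⟨a, rfl⟩

lemma eq_mk_zero_one_of_forall_cycleRank_eq_zero {e : Sym2 (Fin (n + 3))}
    (he : e ∈ (cycleGraph (n + 3)).edgeSet) (hrank : ∀ i ∈ e, cycleRank i = 0) :
    e = s(0, 1) := by
  obtain ⟨i, rfl⟩ := exists_eq_mk_add_one_of_mem_edgeSet_cycleGraph he
  have hi := hrank i (Sym2.mem_mk_left i _)
  have hi' := hrank (i + 1) (Sym2.mem_mk_right i _)
  have hzero : i = 0 := by
    simp only [cycleRank, Fin.val_add_one, Fin.ext_iff, Fin.val_last] at hi hi'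
    grind
  rw [hzero, zero_add]

lemma add_one_lt_cycleRank {i v : Fin (n + 3)} (hv : 0 < cycleRank v) (hi : i ∈ cycleBefore v)
    (hi' : i + 1 ∈ cycleBefore v) : (i : ℕ) + 1 < cycleRank v := by
  simp only [mem_cycleBefore, ne_eq, Fin.ext_iff, cycleRank, Fin.val_add_one, Fin.val_last]
    at hi hi' hv ⊢
  lia

lemma card_edgesWithin_cycleBefore_le {v : Fin (n + 3)} (hv : 0 < cycleRank v) :
    #(edgesWithin (cycleGraph (n + 3)) (cycleBefore v)) ≤ cycleRank v - 1 := by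
  have hsub : edgesWithin (cycleGraph (n + 3)) (cycleBefore v) ⊆
      ({i | (i : ℕ) < cycleRank v - 1} : Finset (Fin (n + 3))).image fun i ↦ s(i, i + 1) := by
    intro e he
    obtain ⟨i, rfl⟩ := exists_eq_mk_add_one_of_mem_edgeSet_cycleGraph (mem_edgesWithin.1 he).2
    obtain ⟨hi, hi'⟩ := (mk_mem_edgesWithin.1 he).1
    have := add_one_lt_cycleRank hv hi hi'
    exact Finset.mem_image_of_mem _ (by rw [Finset.mem_filter_univ]; lia)
  calc #(edgesWithin (cycleGraph (n + 3)) (cycleBefore v))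
    _ ≤ #({i | (i : ℕ) < cycleRank v - 1} : Finset (Fin (n + 3))) :=
        (Finset.card_le_card hsub).trans Finset.card_image_le
    _ ≤ cycleRank v - 1 := Fin.card_filter_val_lt.trans_le (min_le_right _ _)

lemma card_neighbors_mul_card_edgesWithin_cycleBefore_eq_zero {v : Fin (n + 3)}
    (hv : cycleRank v = 0) :
    #{w ∈ cycleBefore v | (cycleGraph (n + 3)).Adj v w} *
      #(edgesWithin (cycleGraph (n + 3)) (cycleBefore v)) = 0 := by
  by_contra h
  obtain ⟨hN, hE⟩ := mul_ne_zero_iff.1 h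
  obtain ⟨w, hw⟩ := Finset.card_ne_zero.1 hN
  obtain ⟨e, he⟩ := Finset.card_ne_zero.1 hE
  rw [Finset.mem_filter] at hw
  rw [mem_edgesWithin] at he
  have hrank (i) (hi : i ∈ cycleBefore v) : cycleRank i = 0 :=
    Nat.le_zero.1 (hv ▸ (mem_cycleBefore.1 hi).2)
  have hvw : s(v, w) = s(0, 1) :=
    eq_mk_zero_one_of_forall_cycleRank_eq_zero hw.2 <| by simp [hv, hrank w hw.1]
  have he01 : e = s(0, 1) :=
    eq_mk_zero_one_of_forall_cycleRank_eq_zero he.2 fun i hi ↦ hrank i (he.1 i hi)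
  have hve : v ∈ e := he01.trans hvw.symm ▸ Sym2.mem_mk_left v w
  exact (mem_cycleBefore.1 (he.1 v hve)).1 rfl

lemma arrowsTo_blowup_cycleGraph (n : ℕ) :
    ArrowsTo (blowup (cycleGraph (n + 3)) fun i ↦ Fin (cyclePartSize i)) (cycleGraph (n + 3)) := by
  refine arrowsTo_blowup cycleRank (A := cycleBefore)
    (fun v w hne hle ↦ mem_cycleBefore.2 ⟨hne, hle⟩) fun v ↦ ?_
  rw [Fintype.card_fin]
  rcases (cycleRank v).eq_zero_or_pos with hv | hv
  · rw [card_neighbors_mul_card_edgesWithin_cycleBefore_eq_zero hv]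
    exact Nat.one_pos.trans_le (le_max_left _ _)
  have hdeg : #{w ∈ cycleBefore v | (cycleGraph (n + 3)).Adj v w} ≤ 2 := by
    rw [← cycleGraph_degree_three_le (v := v), ← card_neighborFinset_eq_degree]
    exact Finset.card_le_card fun w hw ↦ by simpa using (Finset.mem_filter.1 hw).2
  calc _ ≤ 2 * (cycleRank v - 1) := Nat.mul_le_mul hdeg (card_edgesWithin_cycleBefore_le hv)
    _ < 2 * cycleRank v - 1 := by lia
    _ ≤ cyclePartSize v := le_max_right _ _

lemma cyclePartSize_mul_le (i : Fin (n + 3)) :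
    cyclePartSize i * cyclePartSize (i + 1) ≤ 2 * i + 1 := by
  simp only [cyclePartSize, cycleRank, Fin.val_add_one, Fin.ext_iff, Fin.val_last]
  split_ifs <;> grind

lemma sum_two_mul_add_one (k : ℕ) : ∑ i : Fin k, (2 * (i : ℕ) + 1) = k ^ 2 := by
  induction k with
  | zero => rfl
  | succ k ih =>
    simp only [Fin.sum_univ_castSucc, Fin.val_castSucc, ih, Fin.val_last]
    ring

theorem ARs_cycleGraph_le (n : ℕ) : ARs (cycleGraph (n + 3)) ≤ (n + 3) ^ 2 :=
  calc ARs (cycleGraph (n + 3))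
    _ ≤ (blowup (cycleGraph (n + 3)) fun i ↦ Fin (cyclePartSize i)).edgeSet.ncard :=
        ARs_le_ncard_edgeSet (arrowsTo_blowup_cycleGraph n)
    _ ≤ ∑ i : Fin (n + 3), cyclePartSize i * cyclePartSize (i + 1) := by
        have := ncard_edgeSet_blowup_le (P := fun i : Fin (n + 3) ↦ Fin (cyclePartSize i))
          (a := id) (b := (· + 1)) fun e he ↦ exists_eq_mk_add_one_of_mem_edgeSet_cycleGraph he
        simpa only [Fintype.card_fin, id] using this
    _ ≤ ∑ i : Fin (n + 3), (2 * (i : ℕ) + 1) := Finset.sum_le_sum fun i _ ↦ cyclePartSize_mul_le i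
    _ = (n + 3) ^ 2 := sum_two_mul_add_one _

end Cycle

theorem stmt_8 (k : ℕ) (hk : 3 ≤ k) :
    (k : ℝ) * ((k : ℝ) - 1) / 4 ≤ (ARs (SimpleGraph.pathGraph k) : ℝ) ∧
    ARs (SimpleGraph.pathGraph k) ≤ ARs (SimpleGraph.cycleGraph k) ∧
    (ARs (SimpleGraph.cycleGraph k) : ℝ) ≤ (k : ℝ) ^ 2 := by
  obtain ⟨n, rfl⟩ := Nat.exists_eq_add_of_le' hk
  refine ⟨?_, ARs_mono (.of_le pathGraph_le_cycleGraph), mod_cast ARs_cycleGraph_le n⟩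
  have hedges : n + 2 ≤ (pathGraph (n + 3)).edgeSet.ncard := le_ncard_edgeSet_pathGraph (n + 2)
  have hlower : (n + 2) * (n + 3) ≤ 2 * 2 * ARs (pathGraph (n + 3)) :=
    (Nat.mul_le_mul hedges (by lia)).trans
      (ncard_edgeSet_mul_le_ARs (lineGraph_pathGraph_colorable_two (n + 3)))
  rify at hlower
  push_cast
  linarith
end

section
/- Let H be a graph with k ≥ 1 edges and chromatic index χ′(H) (the minimum number of colors in a proper edge coloring of H). Then every H-good graph G has at least k²/(4·χ′(H)) edges. -/
open SimpleGraph

/-- The chromatic index of `H`: the minimum number of colors in a proper edge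
coloring of `H`. -/
noncomputable def chromIndex {W : Type*} (H : SimpleGraph W) : ℕ :=
  sInf {m | ∃ c : Sym2 W → ℕ, IsProperEdgeColoring H c ∧ ∀ e ∈ H.edgeSet, c e < m}

/-- An `H`-good coloring of `G`: a proper edge coloring with colors in the
positive integers that contains a rainbow copy of `H`, and such that every edge
of color `i` has, for each `1 ≤ j < i`, an adjacent edge of color `j`. -/
def IsHGoodColoring {V W : Type*} (H : SimpleGraph W) (G : SimpleGraph V)
    (c : Sym2 V → ℕ) : Prop :=
  IsProperEdgeColoring G c ∧
  (∀ e ∈ G.edgeSet, 1 ≤ c e) ∧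
  HasRainbowCopy G H c ∧
  ∀ e ∈ G.edgeSet, ∀ j : ℕ, 1 ≤ j → j < c e →
    ∃ e' ∈ G.edgeSet, c e' = j ∧ ∃ v, v ∈ e ∧ v ∈ e'

/-- A graph `G` is `H`-good if it admits an `H`-good coloring. -/
def HGood {V W : Type*} (H : SimpleGraph W) (G : SimpleGraph V) : Prop :=
  ∃ c : Sym2 V → ℕ, IsHGoodColoring H G c

/-!
Each edge of color `i` meets edges of all the colors `1, …, i`, so its color is at most the number
of edges it meets. Sum this over the rainbow copy of `H` in `G`. The colors are distinct positive
integers, so the sum is at least `k (k + 1) / 2`. Conversely an edge of `G` meets at most `2 Δ`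
edges of the copy, `Δ` being the maximum degree of `H`, so the sum is at most `2 Δ |E(G)|`. Finally
`Δ ≤ χ'(H)`.
-/

section

variable {V W : Type*} {G : SimpleGraph V} {H : SimpleGraph W}

theorem card_mul_succ_le_two_mul_sum_of_injOn {ι : Type*} {s : Finset ι} {a : ι → ℕ}
    (ha : Set.InjOn a s) (hpos : ∀ i ∈ s, 1 ≤ a i) :
    s.card * (s.card + 1) ≤ 2 * ∑ i ∈ s, a i := by
  have ha' : Set.InjOn (fun i ↦ (a i : ℤ)) s := fun i hi j hj hij ↦
    ha hi hj (Int.ofNat_inj.mp hij)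
  have hsum : ∑ n ∈ Finset.range s.card, (1 + n : ℤ) ≤ ∑ i ∈ s, (a i : ℤ) := by
    have h := Finset.sum_range_le_sum (s := s.image fun i ↦ (a i : ℤ)) (c := 1)
      (by simpa using hpos)
    rwa [Finset.card_image_of_injOn ha', Finset.sum_image ha'] at h
  calc
    s.card * (s.card + 1) = 2 * ∑ n ∈ Finset.range s.card, (n + 1) := by
      have h := Finset.sum_range_id_mul_two (s.card + 1)
      rw [Finset.sum_range_succ', Nat.add_sub_cancel] at h
      linarith
    _ ≤ 2 * ∑ i ∈ s, a i := by gcongr; zify; simpa only [add_comm] using hsum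

theorem exists_isProperEdgeColoring_lt_chromIndex (H : SimpleGraph W) [Finite H.edgeSet] :
    ∃ c : Sym2 W → ℕ, IsProperEdgeColoring H c ∧ ∀ e ∈ H.edgeSet, c e < chromIndex H := by
  obtain ⟨c, hc⟩ := Set.countable_iff_exists_injOn.mp (Set.toFinite H.edgeSet).countable
  obtain ⟨m, hm⟩ := ((Set.toFinite H.edgeSet).image c).bddAbove
  have hproper : IsProperEdgeColoring H c := fun e₁ h₁ e₂ h₂ hne _ h ↦ hne (hc h₁ h₂ h)
  have hne : {m | ∃ c : Sym2 W → ℕ, IsProperEdgeColoring H c ∧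
      ∀ e ∈ H.edgeSet, c e < m}.Nonempty :=
    ⟨m + 1, c, hproper, fun e he ↦ Nat.lt_succ_of_le (hm ⟨e, he, rfl⟩)⟩
  exact Nat.sInf_mem hne

theorem IsProperEdgeColoring.ncard_incidenceSet_le {c : Sym2 V → ℕ} {m : ℕ}
    (hc : IsProperEdgeColoring G c) {v : V} (hlt : ∀ e ∈ G.incidenceSet v, c e < m) :
    (G.incidenceSet v).ncard ≤ m := by
  have hinj : Set.InjOn c (G.incidenceSet v) := fun e₁ h₁ e₂ h₂ h ↦
    by_contra fun hne ↦ hc e₁ h₁.1 e₂ h₂.1 hne ⟨v, h₁.2, h₂.2⟩ h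
  simpa using Set.ncard_le_ncard_of_injOn (t := Set.Iio m) c hlt hinj

theorem ncard_incidenceSet_le_chromIndex [Finite H.edgeSet] (v : W) :
    (H.incidenceSet v).ncard ≤ chromIndex H := by
  obtain ⟨c, hc, hlt⟩ := exists_isProperEdgeColoring_lt_chromIndex H
  exact hc.ncard_incidenceSet_le fun e he ↦ hlt e he.1

/-- Two edges meet if they share an endpoint; in particular, every edge meets itself. -/
def EdgesMeet (e₁ e₂ : Sym2 V) : Prop := ∃ v, v ∈ e₁ ∧ v ∈ e₂

theorem EdgesMeet.refl (e : Sym2 V) : EdgesMeet e e :=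
  ⟨_, Sym2.out_fst_mem e, Sym2.out_fst_mem e⟩

theorem edgesMeet_mk_right_iff {e : Sym2 V} {a b : V} : EdgesMeet e s(a, b) ↔ a ∈ e ∨ b ∈ e := by
  simp only [EdgesMeet, Sym2.mem_iff]
  grind

section InjectiveImage

variable {f : W → V} {D : ℕ}

theorem ncard_edges_mem_map_le (hf : Function.Injective f)
    (hD : ∀ w, (H.incidenceSet w).ncard ≤ D) (v : V) :
    {e ∈ H.edgeSet | v ∈ e.map f}.ncard ≤ D := by
  by_cases hv : ∃ w, f w = v
  · obtain ⟨w, rfl⟩ := hv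
    have : {e ∈ H.edgeSet | f w ∈ e.map f} = H.incidenceSet w := by
      ext e
      simp [incidenceSet, Sym2.mem_map, hf.eq_iff]
    exact this ▸ hD w
  · have : {e ∈ H.edgeSet | v ∈ e.map f} = ∅ :=
      Set.eq_empty_of_forall_notMem fun _ ⟨_, he⟩ ↦
        let ⟨w, _, hw⟩ := Sym2.mem_map.mp he
        hv ⟨w, hw⟩
    rw [this, Set.ncard_empty]
    exact D.zero_le

theorem ncard_edges_map_meet_le [Finite H.edgeSet] (hf : Function.Injective f)
    (hD : ∀ w, (H.incidenceSet w).ncard ≤ D) (e' : Sym2 V) :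
    {e ∈ H.edgeSet | EdgesMeet (e.map f) e'}.ncard ≤ 2 * D := by
  induction e' using Sym2.ind with
  | _ a b =>
    have hunion : {e ∈ H.edgeSet | EdgesMeet (e.map f) s(a, b)} =
        {e ∈ H.edgeSet | a ∈ e.map f} ∪ {e ∈ H.edgeSet | b ∈ e.map f} := by
      simp only [edgesMeet_mk_right_iff, and_or_left, Set.ofPred_or]
    calc
      _ ≤ {e ∈ H.edgeSet | a ∈ e.map f}.ncard + {e ∈ H.edgeSet | b ∈ e.map f}.ncard :=
        hunion ▸ Set.ncard_union_le _ _
      _ ≤ D + D := add_le_add (ncard_edges_mem_map_le hf hD a) (ncard_edges_mem_map_le hf hD b)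
      _ = 2 * D := (two_mul D).symm

end InjectiveImage

/-- A coloring as left by the greedy algorithm, which gives an edge color `i` only if all the colors
`1, …, i - 1` already occur on edges meeting it. Properness is not part of the definition. -/
def IsGreedyEdgeColoring (G : SimpleGraph V) (c : Sym2 V → ℕ) : Prop :=
  ∀ e ∈ G.edgeSet, ∀ j, 1 ≤ j → j < c e → ∃ e' ∈ G.edgeSet, c e' = j ∧ EdgesMeet e e'

namespace IsGreedyEdgeColoring

variable {c : Sym2 V → ℕ} [Finite G.edgeSet]

theorem color_le_ncard_meeting (hc : IsGreedyEdgeColoring G c) {e : Sym2 V}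
    (he : e ∈ G.edgeSet) : c e ≤ {e' ∈ G.edgeSet | EdgesMeet e e'}.ncard := by
  have hcolors : Set.Icc 1 (c e) ⊆ c '' {e' ∈ G.edgeSet | EdgesMeet e e'} := by
    rintro j ⟨hj, hje⟩
    rcases hje.lt_or_eq with hlt | rfl
    · obtain ⟨e', he', rfl, hmeet⟩ := hc e he j hj hlt
      exact ⟨e', ⟨he', hmeet⟩, rfl⟩
    · exact ⟨e, ⟨he, .refl e⟩, rfl⟩
  have hfin : {e' ∈ G.edgeSet | EdgesMeet e e'}.Finite := Set.toFinite _
  calc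
    c e = (Set.Icc 1 (c e)).ncard := by simp
    _ ≤ (c '' {e' ∈ G.edgeSet | EdgesMeet e e'}).ncard :=
      Set.ncard_le_ncard hcolors (hfin.image c)
    _ ≤ _ := Set.ncard_image_le hfin

theorem sum_color_map_le (hc : IsGreedyEdgeColoring G c) [Fintype H.edgeSet] {f : H →g G}
    (hf : Function.Injective f) {D : ℕ} (hD : ∀ w, (H.incidenceSet w).ncard ≤ D) :
    ∑ e ∈ H.edgeFinset, c (e.map f) ≤ 2 * D * G.edgeSet.ncard := by
  classical
  have := Fintype.ofFinite G.edgeSet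
  let meet (e : Sym2 W) (e' : Sym2 V) : Prop := EdgesMeet (e.map f) e'
  calc
    _ ≤ ∑ e ∈ H.edgeFinset, (G.edgeFinset.bipartiteAbove meet e).card := by
      refine Finset.sum_le_sum fun e he ↦ ?_
      rw [← Set.ncard_coe_finset, Finset.coe_bipartiteAbove]
      simpa only [mem_edgeFinset] using
        hc.color_le_ncard_meeting (f.map_mem_edgeSet (mem_edgeFinset.mp he))
    _ = ∑ e' ∈ G.edgeFinset, (H.edgeFinset.bipartiteBelow meet e').card :=
      Finset.sum_card_bipartiteAbove_eq_sum_card_bipartiteBelow meet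
    _ ≤ G.edgeFinset.card • (2 * D) := by
      refine Finset.sum_le_card_nsmul _ _ _ fun e' _ ↦ ?_
      rw [← Set.ncard_coe_finset, Finset.coe_bipartiteBelow]
      simpa only [mem_edgeFinset] using ncard_edges_map_meet_le hf hD e'
    _ = 2 * D * G.edgeSet.ncard := by
      rw [← coe_edgeFinset, Set.ncard_coe_finset, smul_eq_mul, mul_comm]

end IsGreedyEdgeColoring

theorem HGood.finite_edgeSet [Finite G.edgeSet] (hG : HGood H G) : Finite H.edgeSet := by
  obtain ⟨_, _, _, ⟨f, hf, _⟩, _⟩ := hG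
  exact Finite.of_injective f.mapEdgeSet (Hom.mapEdgeSet.injective f hf)

theorem HGood.ncard_mul_succ_le_of_ncard_incidenceSet_le [Finite G.edgeSet] (hG : HGood H G)
    {D : ℕ} (hD : ∀ w, (H.incidenceSet w).ncard ≤ D) :
    H.edgeSet.ncard * (H.edgeSet.ncard + 1) ≤ 4 * D * G.edgeSet.ncard := by
  have := hG.finite_edgeSet
  have := Fintype.ofFinite H.edgeSet
  obtain ⟨c, _, hpos, ⟨f, hf, hrainbow⟩, hgreedy : IsGreedyEdgeColoring G c⟩ := hG
  have hinj : Set.InjOn (fun e : Sym2 W ↦ c (e.map f)) H.edgeFinset := by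
    rw [coe_edgeFinset]
    exact fun e₁ h₁ e₂ h₂ ↦ hrainbow e₁ h₁ e₂ h₂
  have hlower := card_mul_succ_le_two_mul_sum_of_injOn hinj fun e he ↦
    hpos _ (f.map_mem_edgeSet (mem_edgeFinset.mp he))
  have hupper := hgreedy.sum_color_map_le hf hD
  rw [← coe_edgeFinset, Set.ncard_coe_finset]
  linarith

theorem stmt_12_general [Finite G.edgeSet] (hG : HGood H G) :
    H.edgeSet.ncard * (H.edgeSet.ncard + 1) ≤ 4 * chromIndex H * G.edgeSet.ncard :=
  have := hG.finite_edgeSet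
  hG.ncard_mul_succ_le_of_ncard_incidenceSet_le ncard_incidenceSet_le_chromIndex

end

theorem stmt_12 {W : Type} [Fintype W] (H : SimpleGraph W)
    (hk : 1 ≤ H.edgeSet.ncard)
    (V : Type) [Fintype V] (G : SimpleGraph V) (hG : HGood H G) :
    (H.edgeSet.ncard : ℝ) ^ 2 / (4 * (chromIndex H : ℝ)) ≤ (G.edgeSet.ncard : ℝ) := by
  have h : H.edgeSet.ncard ^ 2 ≤ G.edgeSet.ncard * (4 * chromIndex H) := by
    linarith [stmt_12_general hG]
  exact div_le_of_le_mul₀ (by positivity) (by positivity) (mod_cast h)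
end
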